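/- Let n ≥ k ≥ 1, r ≥ 1, ζ ∈ (0,1], and β ≥ ζ. Let μ be a function from the k-element subsets of [n]={1,…,n} to the nonnegative reals satisfying weak (r,β)-approximate exchange. If S is a k-element subset with μ(S) > 0 that is an (r,ζ)-approximate local maximum for μ, then for every k-element subset T of [n] one has μ(T) ≤ (β/ζ)^k · μ(S). -/

import Mathlib

open Finset

/-- `E^i(S,T)`, the set of `i`-exchanges between `S` and `T`: subsets `U` of the symmetric
difference `S Δ T` with `|U ∩ S| = |U ∩ T| = i`. -/
def exch {n : ℕ} (S T : Finset (Fin n)) (i : ℕ) : Finset (Finset (Fin n)) :=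
  (symmDiff S T).powerset.filter (fun U => (U ∩ S).card = i ∧ (U ∩ T).card = i)

/-!
Suppose `μ T > μ S`, put `x = μ S / μ T < 1` and `d = |S \ T|`, and let `U` be an `s`-exchange as
in the weak exchange property. The set `S ∆ U` is an `s`-neighbour of `S`, so local optimality
bounds `μ (S ∆ U)` by `μ S / ζ`, and the exchange inequality becomes `1 ≤ (β / ζ) x ^ (s / d)`.
Since `x < 1` and `s ≥ 1`, the exponent can be lowered to `1 / d`; raising to the power `d` gives
`μ T ≤ (β / ζ) ^ d μ S`, where `d ≤ k`.
-/

lemma one_le_pow_mul_of_one_le_mul_rpow_div {c x s : ℝ} {d : ℕ} (hx0 : 0 ≤ x) (hx1 : x ≤ 1)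
    (hs : 1 ≤ s) (hd : d ≠ 0) (h : 1 ≤ c * x ^ (s / d)) : 1 ≤ c ^ d * x := by
  have hc : 0 < c := pos_of_mul_pos_left (one_pos.trans_le h) (Real.rpow_nonneg hx0 _)
  have hroot : x ^ (s / d) ≤ x ^ (d⁻¹ : ℝ) := by
    refine Real.rpow_le_rpow_of_exponent_ge' hx0 hx1 (by positivity) ?_
    rw [← one_div]
    gcongr
  calc
    1 ≤ (c * x ^ (d⁻¹ : ℝ)) ^ d := one_le_pow₀ (h.trans (by gcongr))
    _ = c ^ d * x := by rw [mul_pow, Real.rpow_inv_natCast_pow hx0 hd]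

section Exchange

open scoped symmDiff

variable {α : Type*} [DecidableEq α] {S T U : Finset α}

lemma sdiff_eq_inter_of_subset_symmDiff (hU : U ⊆ S ∆ T) : U \ S = U ∩ T := by
  ext a
  have hmem : a ∈ U → a ∈ S ∧ a ∉ T ∨ a ∈ T ∧ a ∉ S := fun ha => mem_symmDiff.1 (hU ha)
  simp only [mem_sdiff, mem_inter]
  tauto

lemma card_symmDiff_eq_of_card_inter_eq (hU : U ⊆ S ∆ T) (hcard : #(U ∩ S) = #(U ∩ T)) :
    #(S ∆ U) = #S := by
  rw [← card_sdiff_eq_card_sdiff_iff, symmDiff_sdiff_left, sdiff_symmDiff_left, inf_eq_inter,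
    sdiff_eq_inter_of_subset_symmDiff hU, inter_comm S U, hcard]

/-- `(r, ζ)`-approximate local maximality of `S` for `μ`. Instead of fixing the size `k` of the
sets, `S` is compared with the sets of its own cardinality. -/
def IsApproxLocalMax (μ : Finset α → ℝ) (r : ℕ) (ζ : ℝ) (S : Finset α) : Prop :=
  ∀ T, #T = #S → #(S \ T) ≤ r → ζ * μ T ≤ μ S

/-- The instances of weak `(r, β)`-approximate exchange with first set `S`; the full property for
`k`-sets asks this of every `S` of cardinality `k`. The condition that `U` is an `s`-exchange is
spelled out because the ground set is an arbitrary type, whereas `exch` lives on `Fin n`. -/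
def WeakApproxExchangeAt (μ : Finset α → ℝ) (r : ℕ) (β : ℝ) (S : Finset α) : Prop :=
  ∀ T, #T = #S → 0 < μ S → 0 < μ T → S ≠ T →
    ∃ s ∈ Icc 1 r, ∃ U ⊆ S ∆ T, #(U ∩ S) = s ∧ #(U ∩ T) = s ∧
      μ S ≤ β * μ (S ∆ U) * (μ S / μ T) ^ ((s : ℝ) / (#(S \ T) : ℝ))

variable {μ : Finset α → ℝ} {r : ℕ} {β ζ : ℝ}

lemma IsApproxLocalMax.mul_symmDiff_le (hloc : IsApproxLocalMax μ r ζ S) (hU : U ⊆ S ∆ T)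
    (hcard : #(U ∩ S) = #(U ∩ T)) (hr : #(U ∩ S) ≤ r) : ζ * μ (S ∆ U) ≤ μ S := by
  refine hloc _ (card_symmDiff_eq_of_card_inter_eq hU hcard) ?_
  rwa [sdiff_symmDiff_left, inf_eq_inter, inter_comm]

lemma IsApproxLocalMax.exists_one_le_div_mul_rpow (hloc : IsApproxLocalMax μ r ζ S)
    (hexch : WeakApproxExchangeAt μ r β S) (hζ : 0 < ζ) (hβ : 0 ≤ β) (hS : 0 < μ S)
    (hcard : #T = #S) (hT : 0 < μ T) (hne : S ≠ T) :
    ∃ s : ℕ, 1 ≤ s ∧ 1 ≤ β / ζ * (μ S / μ T) ^ ((s : ℝ) / (#(S \ T) : ℝ)) := by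
  obtain ⟨s, hs, U, hU, hUS, hUT, hgain⟩ := hexch T hcard hS hT hne
  obtain ⟨hs_pos, hs_le⟩ := mem_Icc.1 hs
  have hneighbour : μ (S ∆ U) ≤ μ S / ζ :=
    (le_div_iff₀' hζ).2 (hloc.mul_symmDiff_le hU (hUS.trans hUT.symm) (hUS.trans_le hs_le))
  refine ⟨s, hs_pos, le_of_mul_le_mul_left ?_ hS⟩
  calc
    μ S * 1 = μ S := mul_one _
    _ ≤ β * μ (S ∆ U) * (μ S / μ T) ^ ((s : ℝ) / (#(S \ T) : ℝ)) := hgain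
    _ ≤ β * (μ S / ζ) * (μ S / μ T) ^ ((s : ℝ) / (#(S \ T) : ℝ)) := by gcongr
    _ = μ S * (β / ζ * (μ S / μ T) ^ ((s : ℝ) / (#(S \ T) : ℝ))) := by ring

theorem weak_exchange_implies_local_search_guarantee_general (hζ : 0 < ζ) (hβ : ζ ≤ β)
    (hS : 0 < μ S) (hexch : WeakApproxExchangeAt μ r β S) (hloc : IsApproxLocalMax μ r ζ S)
    (hcard : #T = #S) : μ T ≤ (β / ζ) ^ #(S \ T) * μ S := by
  obtain hle | hlt := le_or_gt (μ T) (μ S)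
  · exact hle.trans (le_mul_of_one_le_left hS.le (one_le_pow₀ ((one_le_div hζ).2 hβ)))
  have hT : 0 < μ T := hS.trans hlt
  have hne : S ≠ T := fun h => hlt.ne (congrArg μ h)
  have hdist : #(S \ T) ≠ 0 := fun h =>
    hne (eq_of_subset_of_card_le (sdiff_eq_empty_iff_subset.1 (card_eq_zero.1 h)) hcard.le)
  obtain ⟨s, hs, hone⟩ :=
    hloc.exists_one_le_div_mul_rpow hexch hζ (hζ.le.trans hβ) hS hcard hT hne
  have hpow : 1 ≤ (β / ζ) ^ #(S \ T) * (μ S / μ T) :=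
    one_le_pow_mul_of_one_le_mul_rpow_div (by positivity) ((div_le_one hT).2 hlt.le)
      (Nat.one_le_cast.2 hs) hdist hone
  rwa [← mul_div_assoc, one_le_div hT] at hpow

end Exchange

lemma mem_exch {n i : ℕ} {S T U : Finset (Fin n)} :
    U ∈ exch S T i ↔ U ⊆ symmDiff S T ∧ #(U ∩ S) = i ∧ #(U ∩ T) = i := by
  rw [exch, mem_filter, mem_powerset]

/-- If `μ` satisfies weak `(r,β)`-approximate exchange, then any `(r,ζ)`-approximate local
maximum is a `(β/ζ)^k`-approximate global maximum. -/
theorem weak_exchange_implies_local_search_guarantee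
    (n k r : ℕ) (β ζ : ℝ)
    (hk : 1 ≤ k) (hkn : k ≤ n) (hr : 1 ≤ r)
    (hζ : 0 < ζ) (hζ1 : ζ ≤ 1) (hβ : ζ ≤ β)
    (μ : Finset (Fin n) → ℝ)
    (hμnonneg : ∀ S : Finset (Fin n), S.card = k → 0 ≤ μ S)
    (hexch : ∀ S T : Finset (Fin n), S.card = k → T.card = k →
      0 < μ S → 0 < μ T → S ≠ T →
      ∃ s ∈ Finset.Icc 1 r, ∃ U ∈ exch S T s,
        μ S ≤ β * μ (symmDiff S U) * (μ S / μ T) ^ ((s : ℝ) / ((S \ T).card : ℝ)))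
    (S : Finset (Fin n)) (hS : S.card = k) (hSpos : 0 < μ S)
    (hloc : ∀ T : Finset (Fin n), T.card = k → (S \ T).card ≤ r → ζ * μ T ≤ μ S) :
    ∀ T : Finset (Fin n), T.card = k → μ T ≤ (β / ζ) ^ k * μ S := by
  subst hS
  intro T hT
  have hexchS : WeakApproxExchangeAt μ r β S := by
    simpa only [WeakApproxExchangeAt, mem_exch, and_assoc] using fun T => hexch S T rfl
  calc
    μ T ≤ (β / ζ) ^ #(S \ T) * μ S :=
      weak_exchange_implies_local_search_guarantee_general hζ hβ hSpos hexchS hloc hT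
    _ ≤ (β / ζ) ^ #S * μ S := by
      gcongr
      · exact (one_le_div hζ).2 hβ
      · exact sdiff_subset
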